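/- Let 𝒞 ⊆ ℤ_m^n be an r-error correcting (𝕡,π)-code, where r ∈ ℕ is a multiple of l = ⌊m/2⌋. Then for all c, c′ ∈ 𝒞 with c ≠ c′ and all ideals I, I′ of 𝕡 with full count and |I| = |I′| = r, one has c − c′ ∉ B_{I⊕I′}, where I⊕I′ is the ideal given by (I⊕I′)(a) = min(l, I(a) + I′(a)). -/

import Mathlib

open scoped Classical

noncomputable section

/-- Lee weight of an element of `ZMod m`. -/
def leeWt (m : ℕ) (a : ZMod m) : ℕ := min a.val (m - a.val)

/-- Block Lee weight of the `i`-th block of `u`. -/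
def blockWt (m s : ℕ) (π : Fin s → ℕ) (u : ∀ i : Fin s, Fin (π i) → ZMod m)
    (i : Fin s) : ℕ :=
  Finset.univ.sup fun t => leeWt m (u i t)

/-- The `(𝕡,π)`-weight of `u`. -/
def pomsetWt (m s : ℕ) (P : PartialOrder (Fin s)) (π : Fin s → ℕ)
    (u : ∀ i : Fin s, Fin (π i) → ZMod m) : ℕ :=
  ∑ i : Fin s,
    if ∃ j, j ≠ i ∧ P.le i j ∧ 0 < blockWt m s π u j then m / 2
    else blockWt m s π u i

/-- The pomset block distance. -/
def pomsetDist (m s : ℕ) (P : PartialOrder (Fin s)) (π : Fin s → ℕ)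
    (u v : ∀ i : Fin s, Fin (π i) → ZMod m) : ℕ :=
  pomsetWt m s P π (u - v)

/-- An ideal of the pomset `𝕡`, given by its count function `I : [s] → {0,…,⌊m/2⌋}`. -/
def IsIdeal (m s : ℕ) (P : PartialOrder (Fin s)) (I : Fin s → ℕ) : Prop :=
  (∀ a, I a ≤ m / 2) ∧ ∀ a b, 0 < I a → P.le b a → b ≠ a → I b = m / 2

/-- An ideal has full count if every element of its root set has count `⌊m/2⌋`. -/
def FullCount (m : ℕ) {s : ℕ} (I : Fin s → ℕ) : Prop :=
  ∀ a, 0 < I a → I a = m / 2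

/-- The cardinality `|I|` of an ideal. -/
def idealCard {s : ℕ} (I : Fin s → ℕ) : ℕ := ∑ a, I a

/-- The cardinality `|I*|` of the root set of an ideal. -/
def rootCard {s : ℕ} (I : Fin s → ℕ) : ℕ :=
  (Finset.univ.filter fun a => 0 < I a).card

/-- `Σ_{i ∈ I*} k_i`. -/
def rootSum {s : ℕ} (π I : Fin s → ℕ) : ℕ :=
  ∑ a ∈ Finset.univ.filter (fun a => 0 < I a), π a

/-- The `I`-ball centered at `u`. -/
def ballI (m s : ℕ) (π : Fin s → ℕ) (I : Fin s → ℕ)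
    (u : ∀ i : Fin s, Fin (π i) → ZMod m) :
    Set (∀ i : Fin s, Fin (π i) → ZMod m) :=
  {v | ∀ i, blockWt m s π (u - v) i ≤ I i}

/-- `𝒞` is `I`-perfect: the `I`-balls centered at codewords are pairwise
disjoint and cover the whole space. -/
def IPerfect (m s : ℕ) (π : Fin s → ℕ) (I : Fin s → ℕ)
    (C : Set (∀ i : Fin s, Fin (π i) → ZMod m)) : Prop :=
  (C.Pairwise fun c c' => Disjoint (ballI m s π I c) (ballI m s π I c')) ∧
  (⋃ c ∈ C, ballI m s π I c) = Set.univ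

/-- The `r`-ball centered at `u`. -/
def ballR (m s : ℕ) (P : PartialOrder (Fin s)) (π : Fin s → ℕ) (r : ℕ)
    (u : ∀ i : Fin s, Fin (π i) → ZMod m) :
    Set (∀ i : Fin s, Fin (π i) → ZMod m) :=
  {v | pomsetDist m s P π u v ≤ r}

/-- The standard dot product on `ℤ_m^n`. -/
def dotProd (m s : ℕ) (π : Fin s → ℕ)
    (c v : ∀ i : Fin s, Fin (π i) → ZMod m) : ZMod m :=
  ∑ i, ∑ t, c i t * v i t

/-- The dual code `𝒞^⊥`. -/
def dualCode (m s : ℕ) (π : Fin s → ℕ)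
    (C : Set (∀ i : Fin s, Fin (π i) → ZMod m)) :
    Set (∀ i : Fin s, Fin (π i) → ZMod m) :=
  {v | ∀ c ∈ C, dotProd m s π c v = 0}

/-- The dual pomset, encoded by the opposite partial order. -/
def dualOrder (s : ℕ) (P : PartialOrder (Fin s)) : PartialOrder (Fin s) where
  le a b := P.le b a
  lt a b := P.lt b a
  le_refl a := P.le_refl a
  le_trans a b c h1 h2 := P.le_trans _ _ _ h2 h1
  lt_iff_le_not_ge a b := P.lt_iff_le_not_ge b a
  le_antisymm a b h1 h2 := (P.le_antisymm _ _ h1 h2).symm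

/-- The minimum `(𝕡,π)`-distance of a code. -/
def minDist (m s : ℕ) (P : PartialOrder (Fin s)) (π : Fin s → ℕ)
    (C : Set (∀ i : Fin s, Fin (π i) → ZMod m)) : ℕ :=
  sInf {r | ∃ c ∈ C, ∃ c' ∈ C, c ≠ c' ∧ r = pomsetWt m s P π (c - c')}

/-- `𝒞` is an MDS `(𝕡,π)`-code: it attains the Singleton bound
`n − ⌈log_m K⌉ ≥ max { Σ_{i∈I*} k_i : I ideal, |I*| = ⌊(d−1)/⌊m/2⌋⌋ }`. -/
def IsMDS (m s : ℕ) (P : PartialOrder (Fin s)) (π : Fin s → ℕ)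
    (C : Set (∀ i : Fin s, Fin (π i) → ZMod m)) : Prop :=
  (∀ I, IsIdeal m s P I →
      rootCard I = (minDist m s P π C - 1) / (m / 2) →
      rootSum π I ≤ (∑ i, π i) - Nat.clog m (Nat.card ↥C)) ∧
  (∃ I, IsIdeal m s P I ∧
      rootCard I = (minDist m s P π C - 1) / (m / 2) ∧
      rootSum π I = (∑ i, π i) - Nat.clog m (Nat.card ↥C))

/-- The chain pomset on `[s]`: the usual total order on `Fin s`. -/
def chainOrder (s : ℕ) : PartialOrder (Fin s) := inferInstance

theorem leeWt_le_half (m : ℕ) (a : ZMod m) : leeWt m a ≤ m / 2 := by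
  unfold leeWt; omega

theorem blockWt_le_half (m s : ℕ) (π : Fin s → ℕ) (u : ∀ i : Fin s, Fin (π i) → ZMod m)
    (i : Fin s) : blockWt m s π u i ≤ m / 2 :=
  Finset.sup_le fun t _ => leeWt_le_half m _

theorem blockWt_of_zero (m s : ℕ) (π : Fin s → ℕ) (u : ∀ i : Fin s, Fin (π i) → ZMod m)
    (i : Fin s) (h : u i = 0) : blockWt m s π u i = 0 := by
  unfold blockWt
  apply Nat.le_zero.mp
  apply Finset.sup_le
  intro t _
  simp [h, leeWt]

theorem zero_of_blockWt (m s : ℕ) (hm : 4 ≤ m) (π : Fin s → ℕ)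
    (u : ∀ i : Fin s, Fin (π i) → ZMod m)
    (i : Fin s) (h : blockWt m s π u i = 0) : u i = 0 := by
  haveI : NeZero m := ⟨by omega⟩
  funext t
  have h1 : leeWt m (u i t) ≤ blockWt m s π u i :=
    Finset.le_sup (f := fun t => leeWt m (u i t)) (Finset.mem_univ t)
  have h2 := ZMod.val_lt (u i t)
  have h3 : (u i t).val = 0 := by
    unfold leeWt at h1; omega
  simpa using (ZMod.val_eq_zero _).mp h3

theorem pomsetWt_le_idealCard (m s : ℕ) (P : PartialOrder (Fin s)) (π : Fin s → ℕ)
    (u : ∀ i : Fin s, Fin (π i) → ZMod m) (I : Fin s → ℕ)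
    (hI : IsIdeal m s P I) (hF : FullCount m I) (h : ∀ i, I i = 0 → u i = 0) :
    pomsetWt m s P π u ≤ idealCard I := by
  have hpos : ∀ i, 0 < blockWt m s π u i → 0 < I i := by
    intro i hi
    by_contra hc
    have := blockWt_of_zero m s π u i (h i (by omega))
    omega
  unfold pomsetWt idealCard
  apply Finset.sum_le_sum
  intro i _
  split_ifs with hj
  · obtain ⟨j, hne, hle, hb⟩ := hj
    exact (hI.2 j i (hpos j hb) hle hne.symm).ge
  · rcases Nat.eq_zero_or_pos (blockWt m s π u i) with h0 | h0
    · omega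
    · rw [hF i (hpos i h0)]
      exact blockWt_le_half m s π u i

/-- for an `r`-error correcting code with `⌊m/2⌋ ∣ r`, differences of
distinct codewords avoid `B_{I ⊕ I'}` for full-count ideals of cardinality `r`. -/
theorem r_error_correcting_avoids_sum_ball
    (m s : ℕ) (hm : 4 ≤ m) (hs : 1 ≤ s)
    (P : PartialOrder (Fin s)) (π : Fin s → ℕ) (hπ : ∀ i, 0 < π i)
    (C : Set (∀ i : Fin s, Fin (π i) → ZMod m))
    (r : ℕ) (hr : (m / 2) ∣ r)
    (hC : C.Pairwise fun c c' =>
      Disjoint (ballR m s P π r c) (ballR m s P π r c')) :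
    ∀ c ∈ C, ∀ c' ∈ C, c ≠ c' →
      ∀ I I' : Fin s → ℕ, IsIdeal m s P I → IsIdeal m s P I' →
        FullCount m I → FullCount m I' →
        idealCard I = r → idealCard I' = r →
        c - c' ∉ ballI m s π (fun a => min (m / 2) (I a + I' a)) 0 := by
  intro c hc c' hc' hne I I' hI hI' hF hF' hr1 hr2 hmem
  have hd := hC hc hc' hne
  replace hd := Set.disjoint_left.mp hd
  apply hd (a := fun i => if I i = 0 then c i else c' i)
  · change pomsetWt m s P π _ ≤ r
    rw [← hr1]
    apply pomsetWt_le_idealCard m s P π _ I hI hF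
    intro i hi
    simp [hi]
  · change pomsetWt m s P π _ ≤ r
    rw [← hr2]
    apply pomsetWt_le_idealCard m s P π _ I' hI' hF'
    intro i hi
    by_cases h0 : I i = 0
    · have h1 : blockWt m s π (0 - (c - c')) i ≤ min (m / 2) (I i + I' i) := hmem i
      have h2 := zero_of_blockWt m s hm π _ i (by omega : blockWt m s π (0 - (c - c')) i = 0)
      simpa [h0] using h2
    · simp [h0]

end
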